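/- arXiv:2510.13487 — 3 statements merged into one kernel-verified Lean document; each statement's English description precedes it below -/
import Mathlib

section
/- Let S ⊆ ℝ, let N ≥ 1, and let W : S → Matrix N N ℂ be such that W(t) is Hermitian and positive definite for every t ∈ S, and suppose there exists a ∈ S with W(a) = I. Then the following are equivalent: (i) there exists a nonsingular constant matrix T ∈ Matrix N N ℂ and, for each t ∈ S, a diagonal matrix D(t) ∈ Matrix N N ℂ, such that W(t) = T · D(t) · T* for all t ∈ S; (ii) W(t)·W(s) = W(s)·W(t) for all t, s ∈ S. -/
/-!
If `W t = T * D t * Tᴴ` and `W a = 1`, then `P = Tᴴ * T` is the inverse of `D a`. It therefore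
commutes with every diagonal matrix, and
`W t * W s = T * (D t * P * D s) * Tᴴ` is symmetric in `t` and `s`.

Conversely, a commuting family of Hermitian matrices has an orthonormal basis of joint
eigenvectors (`exists_orthonormalBasis_joint_eigenvectors`). The unitary matrix `T` with these
vectors as columns satisfies `W t * T = T * D t` with `D t` the diagonal matrix of eigenvalues, and
multiplying by `Tᴴ = T⁻¹` on the right gives the required factorization.
-/

open Matrix
open scoped ComplexOrder

/-- A commuting family of symmetric operators on a finite-dimensional inner product space, indexed
by a possibly infinite type, has an orthonormal basis of joint eigenvectors. -/
theorem exists_orthonormalBasis_joint_eigenvectors {ι E : Type*} [NormedAddCommGroup E]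
    [InnerProductSpace ℂ E] [FiniteDimensional ℂ E] {n : ℕ} (hn : Module.finrank ℂ E = n)
    (A : ι → E →ₗ[ℂ] E) (hA : ∀ i, (A i).IsSymmetric) (hC : ∀ i j, Commute (A i) (A j)) :
    ∃ (b : OrthonormalBasis (Fin n) ℂ E) (χ : Fin n → ι → ℂ),
      ∀ k i, A i (b k) = χ k i • b k := by
  classical
  let V : (ι → ℂ) → Submodule ℂ E := fun α => ⨅ j, Module.End.eigenspace (A j) (α j)
  have hV : DirectSum.IsInternal V :=
    LinearMap.IsSymmetric.directSum_isInternal_of_pairwise_commute hA fun i j _ => hC i j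
  have hO : OrthogonalFamily ℂ (fun α => V α) fun α => (V α).subtypeₗᵢ :=
    LinearMap.IsSymmetric.orthogonalFamily_iInf_eigenspaces hA
  -- There are infinitely many candidate joint eigenvalues, but only finitely many nonzero joint
  -- eigenspaces, and a subordinate basis requires a finite index type.
  have hfin : {α | V α ≠ ⊥}.Finite :=
    WellFoundedGT.finite_ne_bot_of_iSupIndep hV.submodule_iSupIndep
  have : Fintype {α // V α ≠ ⊥} := hfin.fintype
  have hV' : DirectSum.IsInternal fun α : {α // V α ≠ ⊥} => V α :=
    DirectSum.isInternal_ne_bot_iff.mpr hV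
  have hO' : OrthogonalFamily ℂ (fun α : {α // V α ≠ ⊥} => V α) fun α => (V α).subtypeₗᵢ :=
    hO.comp Subtype.val_injective
  refine ⟨hV'.subordinateOrthonormalBasis hn hO',
    fun k => (hV'.subordinateOrthonormalBasisIndex hn k hO').1, fun k i => ?_⟩
  have h := hV'.subordinateOrthonormalBasis_subordinate hn k hO'
  exact Module.End.mem_eigenspace_iff.mp ((Submodule.mem_iInf _).mp h i)

/-- A commuting family of Hermitian matrices is simultaneously unitarily diagonalizable. -/
theorem exists_unitary_diagonalizing {ι : Type*} {N : ℕ} (W : ι → Matrix (Fin N) (Fin N) ℂ)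
    (hW : ∀ i, (W i).IsHermitian) (hC : ∀ i j, W i * W j = W j * W i) :
    ∃ (T : Matrix (Fin N) (Fin N) ℂ) (χ : Fin N → ι → ℂ), Tᴴ * T = 1 ∧
      ∀ i, W i = T * diagonal (fun k => χ k i) * Tᴴ := by
  obtain ⟨b, χ, hb⟩ := exists_orthonormalBasis_joint_eigenvectors
    (finrank_euclideanSpace_fin (𝕜 := ℂ) (n := N)) (fun i => (W i).toEuclideanLin)
    (fun i => isSymmetric_toEuclideanLin_iff.mpr (hW i)) (fun i j => by
      ext v : 1
      apply (WithLp.ofLp_injective 2)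
      simp [Matrix.mulVec_mulVec, hC i j])
  let T : Matrix (Fin N) (Fin N) ℂ := Matrix.of fun i k => b k i
  have hT : Tᴴ * T = 1 := by
    ext k l
    have h := orthonormal_iff_ite.mp b.orthonormal k l
    simp only [PiLp.inner_apply, RCLike.inner_apply] at h
    simpa [Matrix.mul_apply, T, Matrix.one_apply, mul_comm] using h
  refine ⟨T, χ, hT, fun i => ?_⟩
  have hWT : W i * T = T * diagonal (fun k => χ k i) := by
    ext j k
    have h := congrArg (fun v : EuclideanSpace ℂ (Fin N) => v j) (hb k i)
    rw [mul_diagonal]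
    simpa [Matrix.mul_apply, T, Matrix.mulVec, dotProduct, mul_comm] using h
  rw [← hWT, Matrix.mul_assoc, mul_eq_one_comm.mp hT, Matrix.mul_one]

/-- Diagonal matrices commute. -/
theorem isDiag_mul_comm {N : ℕ} {A B : Matrix (Fin N) (Fin N) ℂ} (hA : A.IsDiag)
    (hB : B.IsDiag) : A * B = B * A := by
  rw [← hA.diagonal_diag, ← hB.diagonal_diag]
  simp [diagonal_mul_diagonal, mul_comm]


/-- For a Hermitian positive-definite matrix function `W` on `S ⊆ ℝ`
normalized by `W a = 1` at some `a ∈ S`, `W` reduces to scalar weights (i.e. there is a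
nonsingular constant matrix `T` with `W t = T * D t * Tᴴ`, `D t` diagonal, for all `t ∈ S`)
if and only if the values of `W` pairwise commute on `S`. -/
theorem reduces_to_scalar_weights_iff_commutes
    (N : ℕ) (hN : 1 ≤ N) (S : Set ℝ)
    (W : ℝ → Matrix (Fin N) (Fin N) ℂ)
    (hHerm : ∀ t ∈ S, (W t).IsHermitian)
    (hPos : ∀ t ∈ S, (W t).PosDef)
    (a : ℝ) (haS : a ∈ S) (hWa : W a = 1) :
    (∃ T : Matrix (Fin N) (Fin N) ℂ, IsUnit T ∧
        ∃ D : ℝ → Matrix (Fin N) (Fin N) ℂ,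
          ∀ t ∈ S, (D t).IsDiag ∧ W t = T * D t * Tᴴ)
      ↔ (∀ t ∈ S, ∀ s ∈ S, W t * W s = W s * W t) := by
  constructor
  · rintro ⟨T, -, D, hD⟩ t ht s hs
    have h1 : T * (D a * Tᴴ) = 1 := by rw [← Matrix.mul_assoc, ← (hD a haS).2, hWa]
    have h2 : D a * (Tᴴ * T) = 1 := by rw [← Matrix.mul_assoc]; exact mul_eq_one_comm.mp h1
    -- The inverse `Tᴴ * T` of `D a` commutes with everything that commutes with `D a`.
    have hP : ∀ r ∈ S, Commute (Tᴴ * T) (D r) := fun r hr => by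
      have hc := isDiag_mul_comm (hD a haS).1 (hD r hr).1
      have h3 := mul_eq_one_comm.mp h2
      calc Tᴴ * T * D r = Tᴴ * T * (D r * (D a * (Tᴴ * T))) := by rw [h2, Matrix.mul_one]
        _ = Tᴴ * T * ((D a * D r) * (Tᴴ * T)) := by rw [hc, Matrix.mul_assoc (D r)]
        _ = (Tᴴ * T * D a) * (D r * (Tᴴ * T)) := by simp only [Matrix.mul_assoc]
        _ = D r * (Tᴴ * T) := by rw [h3, Matrix.one_mul]
    have key : ∀ r ∈ S, ∀ q ∈ S, W r * W q = T * (D r * D q * (Tᴴ * T)) * Tᴴ :=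
      fun r hr q hq => by
        rw [(hD r hr).2, (hD q hq).2, Matrix.mul_assoc (D r), ← (hP q hq).eq]
        simp only [Matrix.mul_assoc]
    rw [key t ht s hs, key s hs t ht, isDiag_mul_comm (hD t ht).1 (hD s hs).1]
  · intro hC
    obtain ⟨T, χ, hT, h⟩ := exists_unitary_diagonalizing (fun t : S => W t)
      (fun t => hHerm t t.2) (fun t s => hC t t.2 s s.2)
    classical
    -- Off `S` the value of `D` is irrelevant and set to `0`.
    refine ⟨T, IsUnit.of_mul_eq_one_right _ hT,
      fun t => diagonal fun k => if ht : t ∈ S then χ k ⟨t, ht⟩ else 0,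
      fun t ht => ⟨isDiag_diagonal _, ?_⟩⟩
    simpa [ht] using h ⟨t, ht⟩
end

section
/- Let (a,b) ⊆ ℝ (bounded or unbounded), let W : (a,b) → Matrix N N ℂ be twice differentiable with W(t) Hermitian for all t, and assume all moments ∫_a^b tⁿ W(t) dt exist (entrywise absolutely convergent) for every n ≥ 0. Let F₂, F₁, F₀ be matrix polynomials of degrees at most 2, 1, 0 respectively, and let D be the differential operator D(y) = y''F₂ + y'F₁ + yF₀. Assume the boundary conditions: for every n ≥ 0, lim_{t→a⁺} tⁿ F₂(t)W(t) = 0, lim_{t→b⁻} tⁿ F₂(t)W(t) = 0, lim_{t→a⁺} tⁿ[(F₂W)'(t) − F₁(t)W(t)] = 0 and lim_{t→b⁻} tⁿ[(F₂W)'(t) − F₁(t)W(t)] = 0. Assume moreover that on (a,b): (1) F₂W = WF₂*, (2) 2(F₂W)' = WF₁* + F₁W, and (3) (F₂W)'' − (F₁W)' + F₀W = WF₀*. Then D is symmetric with respect to W, i.e. ∫_a^b D(P)(t) W(t) Q(t)* dt = ∫_a^b P(t) W(t) (D(Q)(t))* dt for all matrix polynomials P, Q ∈ ℂ^{N×N}[t].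 -/
/-! Write `A = F₂W`, `B = F₁W`. By the symmetry equations the difference of the two integrands is
the derivative on `(a,b)` of the bilinear concomitant
`G = P' A Q* - P A Q'* - P (A' - B) Q*` (`second_order_algebra`). Each entry of `G` is a finite sum
of polynomials times entries of `A` or of `A' - B`, so the boundary conditions make `G` vanish at
both endpoints, while the finiteness of the moments makes both integrands integrable
(`entry_mem`). The improper fundamental theorem of calculus
(`setIntegral_eq_zero_of_hasDerivAt`) then shows that the difference integrates to `0`. -/

open MeasureTheory Filter Polynomial Matrix

noncomputable section

/-- Square matrix of size `N` with complex entries. -/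
abbrev Mat (N : ℕ) := Matrix (Fin N) (Fin N) ℂ

/-- Matrix polynomial: a square matrix of (complex) polynomials. -/
abbrev MatPoly (N : ℕ) := Matrix (Fin N) (Fin N) (Polynomial ℂ)

/-- Evaluation of a matrix polynomial at a real point. -/
def mpEval {N : ℕ} (P : MatPoly N) (t : ℝ) : Mat N :=
  Matrix.of fun i j => (P i j).eval (t : ℂ)

/-- Entrywise (formal) derivative of a matrix polynomial. -/
def mpDeriv {N : ℕ} (P : MatPoly N) : MatPoly N :=
  Matrix.of fun i j => derivative (P i j)

/-- Entrywise derivative of a matrix-valued function. -/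
def matDeriv {N : ℕ} (f : ℝ → Mat N) : ℝ → Mat N :=
  fun t => Matrix.of fun i j => deriv (fun s => f s i j) t

/-- The right-hand side second order differential operator
`D(y) = y''F₂ + y'F₁ + yF₀` acting on matrix polynomials. -/
def Dpoly {N : ℕ} (F₂ F₁ F₀ : MatPoly N) (P : MatPoly N) : MatPoly N :=
  mpDeriv (mpDeriv P) * F₂ + mpDeriv P * F₁ + P * F₀

/-- The filter of approach to the (possibly infinite) left endpoint `a` from the right. -/
def leftEnd (a : EReal) : Filter ℝ :=
  comap (fun t : ℝ => (t : EReal)) (nhdsWithin a (Set.Ioi a))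

/-- The filter of approach to the (possibly infinite) right endpoint `b` from the left. -/
def rightEnd (b : EReal) : Filter ℝ :=
  comap (fun t : ℝ => (t : EReal)) (nhdsWithin b (Set.Iio b))

/-- Entrywise differentiability at a point, with prescribed derivative. -/
def HasMatDeriv {N : ℕ} (f : ℝ → Mat N) (f' : Mat N) (t : ℝ) : Prop :=
  ∀ i j, HasDerivAt (fun s => f s i j) (f' i j) t

lemma HasMatDeriv.mul {N : ℕ} {f g : ℝ → Mat N} {f' g' : Mat N} {t : ℝ}
    (hf : HasMatDeriv f f' t) (hg : HasMatDeriv g g' t) :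
    HasMatDeriv (fun s => f s * g s) (f' * g t + f t * g') t := by
  intro i j
  simp only [Matrix.mul_apply, Matrix.add_apply, ← Finset.sum_add_distrib]
  exact HasDerivAt.fun_sum fun k _ => (hf i k).mul (hg k j)

lemma HasMatDeriv.add {N : ℕ} {f g : ℝ → Mat N} {f' g' : Mat N} {t : ℝ}
    (hf : HasMatDeriv f f' t) (hg : HasMatDeriv g g' t) :
    HasMatDeriv (fun s => f s + g s) (f' + g') t :=
  fun i j => (hf i j).add (hg i j)

lemma HasMatDeriv.sub {N : ℕ} {f g : ℝ → Mat N} {f' g' : Mat N} {t : ℝ}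
    (hf : HasMatDeriv f f' t) (hg : HasMatDeriv g g' t) :
    HasMatDeriv (fun s => f s - g s) (f' - g') t :=
  fun i j => (hf i j).sub (hg i j)

lemma HasMatDeriv.conjTranspose {N : ℕ} {f : ℝ → Mat N} {f' : Mat N} {t : ℝ}
    (hf : HasMatDeriv f f' t) : HasMatDeriv (fun s => (f s)ᴴ) f'ᴴ t :=
  fun i j => (hf j i).star

lemma HasMatDeriv.matDeriv_eq {N : ℕ} {f : ℝ → Mat N} {f' : Mat N} {t : ℝ}
    (hf : HasMatDeriv f f' t) : matDeriv f t = f' := by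
  ext i j
  exact (hf i j).deriv

lemma HasMatDeriv.congr_of_eventuallyEq {N : ℕ} {f g : ℝ → Mat N} {f' : Mat N} {t : ℝ}
    (hf : HasMatDeriv f f' t) (h : g =ᶠ[nhds t] f) : HasMatDeriv g f' t :=
  fun i j => (hf i j).congr_of_eventuallyEq (h.mono fun s hs => by simp only [hs])

lemma hasMatDeriv_mpEval {N : ℕ} (P : MatPoly N) (t : ℝ) :
    HasMatDeriv (mpEval P) (mpEval (mpDeriv P) t) t :=
  fun i j => ((P i j).hasDerivAt (t : ℂ)).comp_ofReal

lemma mpEval_mul {N : ℕ} (P Q : MatPoly N) (t : ℝ) :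
    mpEval (P * Q) t = mpEval P t * mpEval Q t := by
  ext i j
  simp [mpEval, Matrix.mul_apply, eval_finsetSum]

lemma mpEval_add {N : ℕ} (P Q : MatPoly N) (t : ℝ) :
    mpEval (P + Q) t = mpEval P t + mpEval Q t := by
  ext i j
  simp [mpEval]

/-- A linear space of functions that contains all `tⁿ f` contains all `q f`, `q` a polynomial. -/
lemma poly_mul_mem (V : Submodule ℂ (ℝ → ℂ)) {f : ℝ → ℂ}
    (hf : ∀ n : ℕ, (fun t : ℝ => (t : ℂ) ^ n * f t) ∈ V) (q : ℂ[X]) :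
    (fun t : ℝ => q.eval (t : ℂ) * f t) ∈ V := by
  have : (fun t : ℝ => q.eval (t : ℂ) * f t)
      = ∑ n ∈ Finset.range (q.natDegree + 1),
        q.coeff n • (fun t : ℝ => (t : ℂ) ^ n * f t) := by
    ext t
    simp [eval_eq_sum_range, Finset.sum_mul, mul_assoc]
  rw [this]
  exact V.sum_mem fun n _ => V.smul_mem _ (hf n)

/-- If a linear space of functions contains `tⁿ f` for every entry `f` of `M`, then it contains
every entry of `P M Q*` for matrix polynomials `P`, `Q`. -/
lemma entry_mem {N : ℕ} (V : Submodule ℂ (ℝ → ℂ)) {M : ℝ → Mat N}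
    (hM : ∀ (n : ℕ) (i j : Fin N), (fun t : ℝ => (t : ℂ) ^ n * M t i j) ∈ V)
    (P Q : MatPoly N) (i j : Fin N) :
    (fun t : ℝ => (mpEval P t * M t * (mpEval Q t)ᴴ) i j) ∈ V := by
  -- On the real line the conjugate of a polynomial is the polynomial with conjugate coefficients.
  have hconj : ∀ (q : ℂ[X]) (t : ℝ),
      star (q.eval (t : ℂ)) = (q.map (starRingEnd ℂ)).eval (t : ℂ) := by
    intro q t
    have := Polynomial.eval_map_apply (f := starRingEnd ℂ) (p := q) (t : ℂ)
    rw [Complex.conj_ofReal] at this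
    exact this.symm
  have : (fun t : ℝ => (mpEval P t * M t * (mpEval Q t)ᴴ) i j)
      = ∑ l, ∑ k, fun t : ℝ =>
        (P i k * (Q j l).map (starRingEnd ℂ)).eval (t : ℂ) * M t k l := by
    ext t
    simp only [Matrix.mul_apply, Matrix.conjTranspose_apply, mpEval, Matrix.of_apply,
      Finset.sum_apply, Finset.sum_mul, hconj, eval_mul]
    refine Finset.sum_congr rfl fun l _ => Finset.sum_congr rfl fun k _ => ?_
    ring
  rw [this]
  exact V.sum_mem fun l _ => V.sum_mem fun k _ => poly_mul_mem V (fun n => hM n k l) _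

/-- The functions tending to `0` along a filter. -/
def tendstoZero (l : Filter ℝ) : Submodule ℂ (ℝ → ℂ) where
  carrier := {f | Tendsto f l (nhds 0)}
  zero_mem' := tendsto_const_nhds
  add_mem' hf hg := by
    have h := Tendsto.add hf hg
    rwa [add_zero] at h
  smul_mem' c f hf := by
    have h := Tendsto.const_smul hf c
    rwa [smul_zero] at h

/-- The functions integrable on a set. -/
def integrableFns (S : Set ℝ) : Submodule ℂ (ℝ → ℂ) where
  carrier := {f | IntegrableOn f S volume}
  zero_mem' := integrableOn_zero
  add_mem' hf hg := Integrable.add hf hg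
  smul_mem' c _ hf := Integrable.smul c hf

/-- The pointwise identity `G' = D(P) W Q* - P W D(Q)*`: here `w` is the weight, `fᵢ`, `gᵢ` are the
coefficients and their adjoints, `A₁, A₂` are the derivatives of `f₂ w`, `B₁` is that of `f₁ w`,
and `pᵢ`, `qᵢ` are the derivatives of `P` and `Q*`. -/
lemma second_order_algebra {R : Type*} [Ring R]
    {w f₂ f₁ f₀ g₂ g₁ g₀ A₁ A₂ B₁ p p₁ p₂ q q₁ q₂ : R}
    (h1 : f₂ * w = w * g₂) (h2 : A₁ + A₁ = w * g₁ + f₁ * w)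
    (h3 : A₂ - B₁ + f₀ * w = w * g₀) :
    ((p₂ * (f₂ * w) + p₁ * A₁) * q + p₁ * (f₂ * w) * q₁)
      - ((p₁ * (f₂ * w) + p * A₁) * q₁ + p * (f₂ * w) * q₂)
      - ((p₁ * (A₁ - f₁ * w) + p * (A₂ - B₁)) * q + p * (A₁ - f₁ * w) * q₁)
    = (p₂ * f₂ + p₁ * f₁ + p * f₀) * w * q
      - p * w * (g₂ * q₂ + g₁ * q₁ + g₀ * q) := by
  have e : p * w * (g₂ * q₂ + g₁ * q₁ + g₀ * q)
      = p * (w * g₂) * q₂ + p * (w * g₁) * q₁ + p * (w * g₀) * q := by noncomm_ring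
  rw [e, ← h1, ← h3, eq_sub_iff_add_eq.2 h2.symm]
  noncomm_ring

lemma leftEnd_neBot {a b : EReal} (hab : a < b) : (leftEnd a).NeBot := by
  refine comap_neBot fun s hs => ?_
  obtain ⟨c, hc, hcs⟩ := (mem_nhdsGT_iff_exists_Ioo_subset' hab).1 hs
  obtain ⟨x, hx, hx'⟩ := EReal.lt_iff_exists_real_btwn.1 hc
  exact ⟨x, hcs ⟨hx, hx'⟩⟩

lemma rightEnd_neBot {a b : EReal} (hab : a < b) : (rightEnd b).NeBot := by
  refine comap_neBot fun s hs => ?_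
  obtain ⟨c, hc, hcs⟩ := (mem_nhdsLT_iff_exists_Ioo_subset' hab).1 hs
  obtain ⟨x, hx, hx'⟩ := EReal.lt_iff_exists_real_btwn.1 hc
  exact ⟨x, hcs ⟨hx, hx'⟩⟩

/-- Improper fundamental theorem of calculus on an interval with possibly infinite endpoints, for
a primitive vanishing at both ends. -/
lemma setIntegral_eq_zero_of_hasDerivAt {a b : EReal} (hab : a < b) {S : Set ℝ}
    (hS : S = {t : ℝ | a < (t : EReal) ∧ (t : EReal) < b}) {G g : ℝ → ℂ}
    (hG : ∀ t ∈ S, HasDerivAt G (g t) t) (hg : IntegrableOn g S)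
    (ha : Tendsto G (leftEnd a) (nhds 0)) (hb : Tendsto G (rightEnd b) (nhds 0)) :
    ∫ t in S, g t = 0 := by
  have := leftEnd_neBot hab
  have := rightEnd_neBot hab
  have : (leftEnd a).IsCountablyGenerated := by unfold leftEnd; infer_instance
  have : (rightEnd b).IsCountablyGenerated := by unfold rightEnd; infer_instance
  have hSm : MeasurableSet S := by
    rw [hS]
    exact (measurableSet_lt measurable_const measurable_coe_real_ereal).inter
      (measurableSet_lt measurable_coe_real_ereal measurable_const)
  have hl : ∀ t ∈ S, ∀ᶠ x : ℝ in leftEnd a, a < (x : EReal) ∧ x < t := by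
    intro t ht
    rw [hS] at ht
    filter_upwards [preimage_mem_comap (Ioo_mem_nhdsGT ht.1)] with x hx
    exact ⟨hx.1, EReal.coe_lt_coe_iff.1 hx.2⟩
  have hr : ∀ t ∈ S, ∀ᶠ y : ℝ in rightEnd b, (y : EReal) < b ∧ t < y := by
    intro t ht
    rw [hS] at ht
    filter_upwards [preimage_mem_comap (Ioo_mem_nhdsLT ht.2)] with x hx
    exact ⟨hx.2, EReal.coe_lt_coe_iff.1 hx.1⟩
  have hcov : AECover (volume.restrict S) (leftEnd a ×ˢ rightEnd b)
      (fun z : ℝ × ℝ => Set.Ioc z.1 z.2) := by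
    refine ⟨?_, fun z => measurableSet_Ioc⟩
    refine (ae_restrict_mem hSm).mono fun t ht => ?_
    filter_upwards [(hl t ht).prod_mk (hr t ht)] with z hz
    exact ⟨hz.1.2, hz.2.2.le⟩
  have hlim := hcov.integral_tendsto_of_countably_generated hg
  have hlim0 : Tendsto (fun z : ℝ × ℝ => G z.2 - G z.1) (leftEnd a ×ˢ rightEnd b) (nhds 0) := by
    simpa using (hb.comp tendsto_snd).sub (ha.comp tendsto_fst)
  refine tendsto_nhds_unique (hlim.congr' ?_) hlim0
  obtain ⟨c, hc⟩ := EReal.lt_iff_exists_real_btwn.1 hab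
  have hcS : c ∈ S := by rw [hS]; exact hc
  filter_upwards [(hl c hcS).prod_mk (hr c hcS)] with z hz
  have hle : z.1 ≤ z.2 := (hz.1.2.trans hz.2.2).le
  have hsub : Set.Icc z.1 z.2 ⊆ S := by
    intro t ht
    rw [hS]
    exact ⟨hz.1.1.trans_le (EReal.coe_le_coe_iff.2 ht.1),
      (EReal.coe_le_coe_iff.2 ht.2).trans_lt hz.2.1⟩
  rw [Measure.restrict_restrict measurableSet_Ioc,
    Set.inter_eq_self_of_subset_left (Set.Ioc_subset_Icc_self.trans hsub),
    ← intervalIntegral.integral_of_le hle]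
  refine intervalIntegral.integral_eq_sub_of_hasDerivAt (fun t ht => hG t (hsub ?_)) ?_
  · rwa [Set.uIcc_of_le hle] at ht
  · rw [intervalIntegrable_iff_integrableOn_Ioc_of_le hle]
    exact hg.mono_set (Set.Ioc_subset_Icc_self.trans hsub)

/-- If a twice differentiable Hermitian matrix density `W` on
`(a,b)` (bounded or unbounded) with finite moments satisfies the boundary
conditions and the three symmetry equations with respect to the matrix polynomial
coefficients `F₂, F₁, F₀` (of degrees at most `2, 1, 0`), then the operator
`D(y) = y''F₂ + y'F₁ + yF₀` is symmetric with respect to `W`. -/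
theorem second_order_operator_symmetric
    (N : ℕ) (a b : EReal) (hab : a < b)
    (S : Set ℝ) (hS : S = {t : ℝ | a < (t : EReal) ∧ (t : EReal) < b})
    (W : ℝ → Mat N)
    (hHerm : ∀ t ∈ S, (W t).IsHermitian)
    (hW1 : ∀ (i j : Fin N), ∀ t ∈ S, DifferentiableAt ℝ (fun s => W s i j) t)
    (hW2 : ∀ (i j : Fin N), ∀ t ∈ S, DifferentiableAt ℝ (fun s => matDeriv W s i j) t)
    (hMom : ∀ (n : ℕ) (i j : Fin N), IntegrableOn (fun t : ℝ => (t : ℂ) ^ n * W t i j) S)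
    (F₂ F₁ F₀ : MatPoly N)
    (hdeg2 : ∀ i j, (F₂ i j).degree ≤ 2)
    (hdeg1 : ∀ i j, (F₁ i j).degree ≤ 1)
    (hdeg0 : ∀ i j, (F₀ i j).degree ≤ 0)
    (hbd1a : ∀ (n : ℕ) (i j : Fin N),
      Tendsto (fun t : ℝ => (t : ℂ) ^ n * (mpEval F₂ t * W t) i j) (leftEnd a) (nhds 0))
    (hbd1b : ∀ (n : ℕ) (i j : Fin N),
      Tendsto (fun t : ℝ => (t : ℂ) ^ n * (mpEval F₂ t * W t) i j) (rightEnd b) (nhds 0))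
    (hbd2a : ∀ (n : ℕ) (i j : Fin N),
      Tendsto (fun t : ℝ => (t : ℂ) ^ n *
        (matDeriv (fun s => mpEval F₂ s * W s) t - mpEval F₁ t * W t) i j)
        (leftEnd a) (nhds 0))
    (hbd2b : ∀ (n : ℕ) (i j : Fin N),
      Tendsto (fun t : ℝ => (t : ℂ) ^ n *
        (matDeriv (fun s => mpEval F₂ s * W s) t - mpEval F₁ t * W t) i j)
        (rightEnd b) (nhds 0))
    (heq1 : ∀ t ∈ S, mpEval F₂ t * W t = W t * (mpEval F₂ t)ᴴ)
    (heq2 : ∀ t ∈ S, (2 : ℂ) • matDeriv (fun s => mpEval F₂ s * W s) t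
        = W t * (mpEval F₁ t)ᴴ + mpEval F₁ t * W t)
    (heq3 : ∀ t ∈ S, matDeriv (matDeriv (fun s => mpEval F₂ s * W s)) t
        - matDeriv (fun s => mpEval F₁ s * W s) t + mpEval F₀ t * W t
        = W t * (mpEval F₀ t)ᴴ) :
    ∀ P Q : MatPoly N,
      (Matrix.of fun i j =>
        ∫ t in S, (mpEval (Dpoly F₂ F₁ F₀ P) t * W t * (mpEval Q t)ᴴ) i j)
      = (Matrix.of fun i j =>
        ∫ t in S, (mpEval P t * W t * (mpEval (Dpoly F₂ F₁ F₀ Q) t)ᴴ) i j) := by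
  intro P Q
  have hSo : IsOpen S := by
    rw [hS]
    exact (isOpen_lt continuous_const continuous_coe_real_ereal).inter
      (isOpen_lt continuous_coe_real_ereal continuous_const)
  have hdW : ∀ t ∈ S, HasMatDeriv W (matDeriv W t) t :=
    fun t ht i j => (hW1 i j t ht).hasDerivAt
  have hdW' : ∀ t ∈ S, HasMatDeriv (matDeriv W) (matDeriv (matDeriv W) t) t :=
    fun t ht i j => (hW2 i j t ht).hasDerivAt
  have hdFW : ∀ F : MatPoly N, ∀ t ∈ S, HasMatDeriv (fun s => mpEval F s * W s)
      (mpEval (mpDeriv F) t * W t + mpEval F t * matDeriv W t) t :=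
    fun F t ht => (hasMatDeriv_mpEval F t).mul (hdW t ht)
  have hA : ∀ F : MatPoly N, ∀ t ∈ S, HasMatDeriv (fun s => mpEval F s * W s)
      (matDeriv (fun s => mpEval F s * W s) t) t := by
    intro F t ht
    rw [(hdFW F t ht).matDeriv_eq]
    exact hdFW F t ht
  have hA' : ∀ t ∈ S, HasMatDeriv (matDeriv (fun s => mpEval F₂ s * W s))
      (matDeriv (matDeriv (fun s => mpEval F₂ s * W s)) t) t := by
    intro t ht
    have h := ((hdFW (mpDeriv F₂) t ht).add
      ((hasMatDeriv_mpEval F₂ t).mul (hdW' t ht))).congr_of_eventuallyEq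
      (g := matDeriv (fun s => mpEval F₂ s * W s))
      (by
        filter_upwards [hSo.mem_nhds ht] with s hs
        exact (hdFW F₂ s hs).matDeriv_eq)
    rw [h.matDeriv_eq]
    exact h
  ext i j
  simp only [Matrix.of_apply]
  have hI1 : IntegrableOn
      (fun t => (mpEval (Dpoly F₂ F₁ F₀ P) t * W t * (mpEval Q t)ᴴ) i j) S :=
    entry_mem (integrableFns S) hMom _ _ i j
  have hI2 : IntegrableOn
      (fun t => (mpEval P t * W t * (mpEval (Dpoly F₂ F₁ F₀ Q) t)ᴴ) i j) S :=
    entry_mem (integrableFns S) hMom _ _ i j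
  rw [← sub_eq_zero, ← integral_sub hI1 hI2]
  let G : ℝ → Mat N := fun t =>
    mpEval (mpDeriv P) t * (mpEval F₂ t * W t) * (mpEval Q t)ᴴ
      - mpEval P t * (mpEval F₂ t * W t) * (mpEval (mpDeriv Q) t)ᴴ
      - mpEval P t * (matDeriv (fun s => mpEval F₂ s * W s) t - mpEval F₁ t * W t)
        * (mpEval Q t)ᴴ
  have hlim : ∀ l : Filter ℝ,
      (∀ (n : ℕ) (i j : Fin N),
        Tendsto (fun t : ℝ => (t : ℂ) ^ n * (mpEval F₂ t * W t) i j) l (nhds 0)) →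
      (∀ (n : ℕ) (i j : Fin N), Tendsto (fun t : ℝ => (t : ℂ) ^ n *
        (matDeriv (fun s => mpEval F₂ s * W s) t - mpEval F₁ t * W t) i j) l (nhds 0)) →
      Tendsto (fun t => G t i j) l (nhds 0) := fun l h1 h2 =>
    (tendstoZero l).sub_mem
      ((tendstoZero l).sub_mem (entry_mem (tendstoZero l) h1 (mpDeriv P) Q i j)
        (entry_mem (tendstoZero l) h1 P (mpDeriv Q) i j))
      (entry_mem (tendstoZero l) h2 P Q i j)
  refine setIntegral_eq_zero_of_hasDerivAt hab hS (G := fun t => G t i j) (fun t ht => ?_)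
    (hI1.sub hI2) (hlim _ hbd1a hbd2a) (hlim _ hbd1b hbd2b)
  have hP := hasMatDeriv_mpEval P t
  have hP' := hasMatDeriv_mpEval (mpDeriv P) t
  have hQ := (hasMatDeriv_mpEval Q t).conjTranspose
  have hQ' := (hasMatDeriv_mpEval (mpDeriv Q) t).conjTranspose
  have hGd := ((((hP'.mul (hA F₂ t ht)).mul hQ).sub ((hP.mul (hA F₂ t ht)).mul hQ')).sub
    ((hP.mul ((hA' t ht).sub (hA F₁ t ht))).mul hQ)) i j
  have h2 := heq2 t ht
  rw [two_smul] at h2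
  rw [second_order_algebra (heq1 t ht) h2 (heq3 t ht)] at hGd
  simp only [Dpoly, mpEval_add, mpEval_mul, Matrix.conjTranspose_add, Matrix.conjTranspose_mul]
  exact hGd
end
end

section
/- Let a ∈ ℝ, a ≠ 0, and ξ ∈ ℝ. Define the 2×2 real matrix function W_{a,ξ}(t) = e^{−t²}·[[1, a t],[0, 1]]·diag(ξ, 1)·[[1, 0],[a t, 1]], and the matrix polynomials P_{n,a,ξ}(t) = Hₙ(t)·diag(1, ξ) + n·H_{n−1}(t)·[[0, −a],[−a, a²t]], where Hₙ denotes the n-th physicists' Hermite polynomial. Then for all n, m ∈ ℕ: ∫_ℝ P_{n,a,ξ}(t)·W_{a,ξ}(t)·P_{m,a,ξ}(t)ᵀ dt = δ_{n,m}·√π·2ⁿ·n!·diag(ξ + a²(n+1)/2, ξ(ξ + a²n/2)). -/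
/-!
Put `T(t) = [[1, at], [0, 1]]`, so that `W = e^{-t²} T diag(ξ, 1) Tᵀ`. By the three-term recurrence
`H_{n+1} = 2t Hₙ - 2n H_{n-1}`,
`Pₙ T = [[Hₙ, (a/2) H_{n+1}], [-a n H_{n-1}, ξ Hₙ]]`.
Every entry of `Pₙ W Pₘᵀ = e^{-t²} (Pₙ T) diag(ξ, 1) (Pₘ T)ᵀ` is thus a combination of two
products `H_k H_l e^{-t²}` (`entry_eq`), and the claim reduces to the scalar orthogonality relation
`∫ H_k H_l e^{-t²} = δ_{k,l} √π 2^k k!` (`integral_H_mul_H`).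

The scalar relation is obtained from polynomials `hermP n` with `h_{n+1} = 2X h_n - h_n'`. Since
`(p h_n e^{-t²})' = (p' h_n - p h_{n+1}) e^{-t²}`, integration by parts moves the raising operator
on `h_n` to a derivative on `p` (`integral_hermP_succ`), and `h_{m+1}' = 2(m+1) h_m` lowers both
indices at once.
-/

open MeasureTheory Matrix

noncomputable section

abbrev M2 := Matrix (Fin 2) (Fin 2) ℝ

/-- the `n`-th physicists' Hermite polynomial `Hₙ(t) = (−1)ⁿ e^{t²} (d/dt)ⁿ e^{−t²}`. -/
def H (n : ℕ) (t : ℝ) : ℝ :=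
  (-1 : ℝ) ^ n * Real.exp (t ^ 2) * iteratedDeriv n (fun s => Real.exp (-(s ^ 2))) t

/-- the matrix polynomials `P_{n,a,ξ} = Hₙ·diag(1,ξ) + n·H_{n−1}·[[0,−a],[−a,a²t]]`. -/
def Pher (a ξ : ℝ) (n : ℕ) (t : ℝ) : M2 :=
  H n t • Matrix.diagonal ![1, ξ] + ((n : ℝ) * H (n - 1) t) • !![0, -a; -a, a ^ 2 * t]

/-- the Hermite-type weight `W_{a,ξ}(t) = e^{−t²}[[1,at],[0,1]]·diag(ξ,1)·[[1,0],[at,1]]`. -/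
def Wher (a ξ : ℝ) (t : ℝ) : M2 :=
  Real.exp (-t ^ 2) •
    (!![1, a * t; 0, 1] * Matrix.diagonal ![ξ, 1] * !![1, 0; a * t, 1])

open Polynomial in
/-- The physicists' Hermite polynomials as elements of `ℝ[X]`, given by the raising operator
`p ↦ 2Xp - p'` iterated on `1`. -/
def hermP : ℕ → ℝ[X]
  | 0 => 1
  | n + 1 => 2 * X * hermP n - derivative (hermP n)

lemma hasDerivAt_gauss (t : ℝ) :
    HasDerivAt (fun s : ℝ => Real.exp (-s ^ 2)) (-(2 * t) * Real.exp (-t ^ 2)) t := by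
  have h := ((hasDerivAt_pow 2 t).neg).exp
  refine h.congr_deriv ?_
  simp
  ring

lemma iteratedDeriv_gauss (n : ℕ) :
    iteratedDeriv n (fun s : ℝ => Real.exp (-(s ^ 2)))
      = fun t => (-1) ^ n * (hermP n).eval t * Real.exp (-t ^ 2) := by
  induction n with
  | zero => funext t; simp [hermP]
  | succ n ih =>
    rw [iteratedDeriv_succ, ih]
    funext t
    have h := (((hermP n).hasDerivAt t).const_mul ((-1 : ℝ) ^ n)).mul (hasDerivAt_gauss t)
    refine h.deriv.trans ?_
    simp [hermP]
    ring

lemma H_eq (n : ℕ) (t : ℝ) : H n t = (hermP n).eval t := by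
  have h1 : ((-1 : ℝ) ^ n) * (-1) ^ n = 1 := by rw [← mul_pow]; simp
  have h2 : Real.exp (t ^ 2) * Real.exp (-t ^ 2) = 1 := by rw [← Real.exp_add]; simp
  rw [H, iteratedDeriv_gauss]
  linear_combination (hermP n).eval t * (Real.exp (t ^ 2) * Real.exp (-t ^ 2)) * h1
    + (hermP n).eval t * h2

lemma derivative_hermP (n : ℕ) :
    Polynomial.derivative (hermP (n + 1)) = 2 * ((n : Polynomial ℝ) + 1) * hermP n := by
  induction n with
  | zero => simp [hermP]
  | succ n ih =>
    have e : hermP (n + 2) = 2 * Polynomial.X * hermP (n + 1)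
      - Polynomial.derivative (hermP (n + 1)) := rfl
    have e1 : hermP (n + 1) = 2 * Polynomial.X * hermP n
      - Polynomial.derivative (hermP n) := rfl
    have hd : Polynomial.derivative (2 * ((n : Polynomial ℝ) + 1) * hermP n)
        = 2 * ((n : Polynomial ℝ) + 1) * Polynomial.derivative (hermP n) := by
      simp
    have h2 : Polynomial.derivative (2 * Polynomial.X * hermP (n + 1))
        = 2 * hermP (n + 1) + 2 * Polynomial.X * Polynomial.derivative (hermP (n + 1)) := by
      simp
    rw [e, Polynomial.derivative_sub, h2, ih, hd]
    push_cast
    linear_combination -2 * ((n : Polynomial ℝ) + 1) * e1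

/-- The three-term recurrence in the form `t Hₙ - n H_{n-1} = H_{n+1} / 2`. At `n = 0` the index
`n - 1` truncates to `0`, but its coefficient vanishes. -/
lemma H_recurrence (n : ℕ) (t : ℝ) : t * H n t - n * H (n - 1) t = H (n + 1) t / 2 := by
  simp only [H_eq]
  have e : hermP (n + 1) = 2 * Polynomial.X * hermP n
      - Polynomial.derivative (hermP n) := rfl
  rw [e]
  cases n with
  | zero => simp [hermP]
  | succ n =>
    rw [derivative_hermP]
    simp
    ring

lemma integrable_poly_gauss (p : Polynomial ℝ) :
    Integrable (fun t : ℝ => p.eval t * Real.exp (-t ^ 2)) := by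
  induction p using Polynomial.induction_on' with
  | add p q hp hq =>
    refine (hp.add hq).congr (.of_forall fun t => ?_)
    simp [add_mul]
  | monomial n c =>
    have h := integrable_rpow_mul_exp_neg_mul_sq (b := 1) one_pos (s := n)
      (by have := n.cast_nonneg (α := ℝ); linarith)
    refine (h.const_mul c).congr (.of_forall fun t => ?_)
    simp [mul_assoc]

/-- Adjointness of raising and differentiation for the Gaussian weight. -/
lemma integral_hermP_succ (p : Polynomial ℝ) (n : ℕ) :
    ∫ t : ℝ, (p * hermP (n + 1)).eval t * Real.exp (-t ^ 2)
      = ∫ t : ℝ, (Polynomial.derivative p * hermP n).eval t * Real.exp (-t ^ 2) := by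
  have h := integral_eq_zero_of_hasDerivAt_of_integrable
    (f := fun t : ℝ => (p * hermP n).eval t * Real.exp (-t ^ 2))
    (f' := fun t : ℝ => (Polynomial.derivative p * hermP n).eval t * Real.exp (-t ^ 2)
      - (p * hermP (n + 1)).eval t * Real.exp (-t ^ 2))
    (fun t => by
      refine (((p * hermP n).hasDerivAt t).mul (hasDerivAt_gauss t)).congr_deriv ?_
      simp [hermP]
      ring)
    ((integrable_poly_gauss _).sub (integrable_poly_gauss _)) (integrable_poly_gauss _)
  rw [integral_sub (integrable_poly_gauss _) (integrable_poly_gauss _)] at h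
  linarith

lemma integral_hermP_mul (m n : ℕ) :
    ∫ t : ℝ, (hermP m * hermP n).eval t * Real.exp (-t ^ 2)
      = if m = n then Real.sqrt Real.pi * 2 ^ n * (n.factorial : ℝ) else 0 := by
  induction n generalizing m with
  | zero =>
    cases m with
    | zero =>
      have := integral_gaussian 1
      simpa [hermP] using this
    | succ m =>
      rw [mul_comm, integral_hermP_succ]
      simp [hermP]
  | succ n ih =>
    rw [integral_hermP_succ]
    cases m with
    | zero => simp [hermP]
    | succ m =>
      have : ∀ t : ℝ, (Polynomial.derivative (hermP (m + 1)) * hermP n).eval t * Real.exp (-t ^ 2)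
          = (2 * ((m : ℝ) + 1)) * ((hermP m * hermP n).eval t * Real.exp (-t ^ 2)) := by
        intro t
        rw [derivative_hermP]
        simp
        ring
      simp_rw [this]
      rw [integral_const_mul, ih]
      by_cases hmn : m = n
      · subst hmn
        simp [Nat.factorial_succ, pow_succ]
        ring
      · simp [hmn]

lemma integrable_H_mul_H (m n : ℕ) :
    Integrable (fun t : ℝ => H m t * H n t * Real.exp (-t ^ 2)) := by
  simpa [H_eq] using integrable_poly_gauss (hermP m * hermP n)

lemma integral_H_mul_H (m n : ℕ) :
    ∫ t : ℝ, H m t * H n t * Real.exp (-t ^ 2)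
      = if m = n then Real.sqrt Real.pi * 2 ^ n * (n.factorial : ℝ) else 0 := by
  simpa [H_eq] using integral_hermP_mul m n

/-- The matrix `Pₙ T` with `T(t) = [[1, at], [0, 1]]`, in which `t` no longer occurs explicitly. -/
def Qher (a ξ : ℝ) (n : ℕ) (t : ℝ) : M2 :=
  !![H n t, a / 2 * H (n + 1) t; -a * n * H (n - 1) t, ξ * H n t]

lemma Pher_mul (a ξ : ℝ) (n : ℕ) (t : ℝ) :
    Pher a ξ n t * !![1, a * t; 0, 1] = Qher a ξ n t := by
  have h := H_recurrence n t
  ext i j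
  fin_cases i <;> fin_cases j <;> simp [Pher, Qher, Matrix.mul_apply, Fin.sum_univ_two]
  · linear_combination a * h
  · ring
  · ring

lemma entry_eq (a ξ : ℝ) (n m : ℕ) (t : ℝ) (i j : Fin 2) :
    (Pher a ξ n t * Wher a ξ t * (Pher a ξ m t)ᵀ) i j
      = ξ * (Qher a ξ n t i 0 * Qher a ξ m t j 0 * Real.exp (-t ^ 2))
        + Qher a ξ n t i 1 * Qher a ξ m t j 1 * Real.exp (-t ^ 2) := by
  have hT : (!![1, 0; a * t, 1] : M2) = (!![1, a * t; 0, 1] : M2)ᵀ := by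
    ext i j; fin_cases i <;> fin_cases j <;> rfl
  have h : Pher a ξ n t * Wher a ξ t * (Pher a ξ m t)ᵀ
      = Real.exp (-t ^ 2) •
        (Qher a ξ n t * Matrix.diagonal ![ξ, 1] * (Qher a ξ m t)ᵀ) := by
    rw [← Pher_mul, ← Pher_mul, Matrix.transpose_mul, Wher, hT]
    simp only [Matrix.mul_smul, Matrix.smul_mul, Matrix.mul_assoc]
  rw [h]
  simp [Matrix.mul_apply, Fin.sum_univ_two, Matrix.diagonal_apply]
  ring

/-- Each entry of `Pₙ T` is a constant multiple of a single Hermite polynomial: `coefQ` is the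
constant, and `idxQ` the index. -/
def coefQ (a ξ : ℝ) (n : ℕ) : M2 := !![1, a / 2; -a * n, ξ]

/-- The index of the Hermite polynomial in each entry of `Pₙ T`; see `coefQ`. -/
def idxQ (n : ℕ) : Matrix (Fin 2) (Fin 2) ℕ := !![n, n + 1; n - 1, n]

lemma Qher_apply (a ξ : ℝ) (n : ℕ) (t : ℝ) (i j : Fin 2) :
    Qher a ξ n t i j = coefQ a ξ n i j * H (idxQ n i j) t := by
  fin_cases i <;> fin_cases j <;> simp [Qher, coefQ, idxQ]

lemma entry_eq_H (a ξ : ℝ) (n m : ℕ) (t : ℝ) (i j : Fin 2) :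
    (Pher a ξ n t * Wher a ξ t * (Pher a ξ m t)ᵀ) i j
      = (ξ * coefQ a ξ n i 0 * coefQ a ξ m j 0)
          * (H (idxQ n i 0) t * H (idxQ m j 0) t * Real.exp (-t ^ 2))
        + (coefQ a ξ n i 1 * coefQ a ξ m j 1)
          * (H (idxQ n i 1) t * H (idxQ m j 1) t * Real.exp (-t ^ 2)) := by
  rw [entry_eq]
  simp only [Qher_apply]
  ring

/-- The polynomials `P_{n,a,ξ}` are orthogonal with respect to
`W_{a,ξ}(t)dt` with squared norm `√π·2ⁿ·n!·diag(ξ + a²(n+1)/2, ξ(ξ + a²n/2))`. -/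
theorem hermite_type_orthogonality (a ξ : ℝ) (ha : a ≠ 0) :
    ∀ n m : ℕ,
      (∀ i j : Fin 2,
        Integrable (fun t : ℝ => (Pher a ξ n t * Wher a ξ t * (Pher a ξ m t)ᵀ) i j)) ∧
      (Matrix.of fun i j : Fin 2 =>
          ∫ t : ℝ, (Pher a ξ n t * Wher a ξ t * (Pher a ξ m t)ᵀ) i j)
        = if n = m then
            (Real.sqrt Real.pi * 2 ^ n * (n.factorial : ℝ)) •
              Matrix.diagonal ![ξ + a ^ 2 * ((n : ℝ) + 1) / 2,
                ξ * (ξ + a ^ 2 * (n : ℝ) / 2)]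
          else (0 : M2) := by
  intro n m
  simp only [entry_eq_H]
  refine ⟨fun i j => ((integrable_H_mul_H _ _).const_mul _).add
    ((integrable_H_mul_H _ _).const_mul _), ?_⟩
  ext i j
  rw [Matrix.of_apply, integral_add ((integrable_H_mul_H _ _).const_mul _)
    ((integrable_H_mul_H _ _).const_mul _), integral_const_mul, integral_const_mul,
    integral_H_mul_H, integral_H_mul_H]
  have hsmul : ∀ (P : Prop) [Decidable P] (A : M2),
      (if P then A else 0) i j = if P then A i j else 0 := by
    intro P _ A; split_ifs <;> rfl
  rw [hsmul]
  fin_cases i <;> fin_cases j <;> simp [coefQ, idxQ]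
  · by_cases h : n = m
    · subst h
      simp [Nat.factorial_succ, pow_succ]
      ring
    · simp [h]
  -- off the diagonal the two terms cancel when the indices differ by one; where `n - 1` or `m - 1`
  -- truncates, its coefficient is `0`
  · cases m with
    | zero => simp
    | succ m =>
      by_cases h : n = m
      · subst h
        simp [Nat.factorial_succ, pow_succ]
        ring
      · simp [h]
  · cases n with
    | zero => simp
    | succ n =>
      by_cases h : n = m
      · subst h
        simp [Nat.factorial_succ, pow_succ]
        ring
      · simp [h]
  · cases n with
    | zero => cases m <;> simp; ring
    | succ n =>
      cases m with
      | zero => simp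
      | succ m =>
        by_cases h : n = m
        · subst h
          simp [Nat.factorial_succ, pow_succ]
          ring
        · simp [h]
end
end
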